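/- Every point of Ξ ∪ {0} is an accumulation point of (Ξ ∩ Θ_per) ∪ (Ξ ∩ Θ_dya): for every θ ∈ Ξ ∪ {0} and every ε > 0 there exists t ∈ Ξ with t ∈ Θ_per ∪ Θ_dya and 0 < |t − θ| < ε. -/

import Mathlib

/-- The set `Ξ` of Head's angles: angles `θ ∈ (0, 1/2]` with `2^k θ ∈ [θ, 1] (mod ℤ)`
for all `k ≥ 0`. -/
def HeadXi : Set ℝ :=
  {θ : ℝ | 0 < θ ∧ θ ≤ 1/2 ∧ ∀ k : ℕ, ∃ n : ℤ, θ ≤ 2 ^ k * θ - n ∧ 2 ^ k * θ - n ≤ 1}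

/-- The angles in `(0, 1/2]` periodic under the doubling map. -/
def ThetaPer : Set ℝ :=
  {t : ℝ | 0 < t ∧ t ≤ 1/2 ∧ ∃ k : ℕ, 1 ≤ k ∧ ∃ n : ℤ, 2 ^ k * t - t = n}

/-- The dyadic angles in `(0, 1/2]`. -/
def ThetaDya : Set ℝ :=
  {t : ℝ | 0 < t ∧ t ≤ 1/2 ∧ ∃ k : ℕ, 1 ≤ k ∧ ∃ n : ℤ, 2 ^ k * t = n}

/-!
Dyadic angles alone suffice. Doubling a dyadic `t` of level `m` yields integers from the `m`-th step
on, so only finitely many conditions decide whether `t ∈ Ξ`.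

If every `2 ^ k * θ` has fractional part at least `θ`, as for `θ = 0` and for non-dyadic `θ ∈ Ξ`,
then rounding `θ` up to the next dyadic of level `m` keeps these conditions, because
`2 ^ k * t - t` increases with `t` while `2 ^ k * t` stays at most `⌊2 ^ k * θ⌋ + 1`.

If `θ ∈ Ξ` is dyadic of level `m`, then it is not periodic, so for `0 < k < m` the inequality
`θ ≤ 2 ^ k * θ - n` is strict. Both sides are multiples of `2 ^ (-m)`, so there is room to move `θ`
down by `2 ^ (-p)` whenever `p ≥ 2 * m`; for `m ≤ k < p` the orbit then stays in `[1/2, 1]`.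
-/

theorem mem_thetaDya_of_two_pow_mul_eq {t : ℝ} {m : ℕ} {N : ℤ} (h0 : 0 < t) (h1 : t ≤ 1 / 2)
    (hN : 2 ^ m * t = N) : t ∈ ThetaDya :=
  ⟨h0, h1, m + 1, by lia, 2 * N, by push_cast; rw [← hN]; ring⟩

theorem exists_int_two_pow_mul_eq_of_le {t : ℝ} {m k : ℕ} {N : ℤ} (hN : 2 ^ m * t = N)
    (hk : m ≤ k) : ∃ z : ℤ, 2 ^ k * t = z := by
  obtain ⟨d, rfl⟩ := Nat.exists_eq_add_of_le hk
  exact ⟨2 ^ d * N, by push_cast; rw [← hN]; ring⟩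

theorem half_pow_le_of_two_pow_mul_eq {t : ℝ} {m : ℕ} {N : ℤ} (h0 : 0 < t)
    (hN : 2 ^ m * t = N) : (1 / 2) ^ m ≤ t := by
  have hN0 : (0 : ℝ) < N := hN ▸ by positivity
  have hN1 : (1 : ℝ) ≤ N := by exact_mod_cast hN0
  rwa [one_div_pow, div_le_iff₀' (by positivity), hN]

theorem two_pow_mul_half_pow_le {k d p : ℕ} (h : k + d ≤ p) :
    (2 : ℝ) ^ k * (1 / 2) ^ p ≤ (1 / 2) ^ d :=
  calc (2 : ℝ) ^ k * (1 / 2) ^ p ≤ 2 ^ k * (1 / 2) ^ (k + d) :=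
        mul_le_mul_of_nonneg_left
          (pow_le_pow_of_le_one one_half_pos.le one_half_lt_one.le h) (by positivity)
    _ = (1 / 2) ^ d := by rw [pow_add, ← mul_assoc, ← mul_pow]; norm_num

theorem mem_headXi_inter_thetaDya_of_two_pow_mul_eq {t : ℝ} {m : ℕ} {N : ℤ} (h0 : 0 < t)
    (h1 : t ≤ 1 / 2) (hN : 2 ^ m * t = N)
    (h : ∀ k < m, ∃ n : ℤ, t ≤ 2 ^ k * t - n ∧ 2 ^ k * t - n ≤ 1) :
    t ∈ HeadXi ∩ ThetaDya := by
  refine ⟨⟨h0, h1, fun k ↦ ?_⟩, mem_thetaDya_of_two_pow_mul_eq h0 h1 hN⟩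
  rcases lt_or_ge k m with hk | hk
  · exact h k hk
  · obtain ⟨z, hz⟩ := exists_int_two_pow_mul_eq_of_le hN hk
    exact ⟨z - 1, by push_cast; linarith, by push_cast; linarith⟩

/-- The least dyadic number of level `m` strictly above `θ`; on dyadic `θ` of level `m` it differs
from `⌈2 ^ m * θ⌉ / 2 ^ m`, which would return `θ` itself. -/
noncomputable def dyadicAbove (m : ℕ) (θ : ℝ) : ℝ :=
  (⌊2 ^ m * θ⌋ + 1) / 2 ^ m

section dyadicAbove

variable (m : ℕ) (θ : ℝ)

theorem two_pow_mul_dyadicAbove : 2 ^ m * dyadicAbove m θ = (⌊2 ^ m * θ⌋ + 1 : ℤ) := by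
  rw [dyadicAbove, mul_div_cancel₀ _ (by positivity)]
  push_cast
  rfl

theorem lt_dyadicAbove : θ < dyadicAbove m θ := by
  rw [dyadicAbove, lt_div_iff₀' (by positivity)]
  exact Int.lt_floor_add_one _

theorem dyadicAbove_le : dyadicAbove m θ ≤ θ + (1 / 2) ^ m := by
  rw [dyadicAbove, div_le_iff₀' (by positivity), mul_add, ← mul_pow]
  have hone : (2 * (1 / 2) : ℝ) ^ m = 1 := by norm_num
  linarith [Int.floor_le (2 ^ m * θ)]

variable {m} in
theorem two_pow_mul_dyadicAbove_le {k : ℕ} (hk : k ≤ m) :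
    2 ^ k * dyadicAbove m θ ≤ ⌊2 ^ k * θ⌋ + 1 := by
  obtain ⟨d, rfl⟩ := Nat.exists_eq_add_of_le hk
  have hfloor : ⌊2 ^ (k + d) * θ⌋ < 2 ^ d * (⌊2 ^ k * θ⌋ + 1) := by
    rw [Int.floor_lt]
    push_cast
    rw [pow_add, mul_right_comm, mul_comm]
    gcongr
    exact Int.lt_floor_add_one _
  have hceil : ((⌊2 ^ (k + d) * θ⌋ + 1 : ℤ) : ℝ) ≤ 2 ^ d * (⌊2 ^ k * θ⌋ + 1) := by
    exact_mod_cast Int.add_one_le_iff.mpr hfloor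
  rw [← two_pow_mul_dyadicAbove, pow_add, mul_right_comm, mul_comm] at hceil
  exact le_of_mul_le_mul_left hceil (by positivity)

end dyadicAbove

theorem dyadicAbove_mem_headXi_inter_thetaDya {θ : ℝ} {m : ℕ} (hm : 1 ≤ m) (h0 : 0 ≤ θ)
    (h : ∀ k : ℕ, θ ≤ Int.fract (2 ^ k * θ)) : dyadicAbove m θ ∈ HeadXi ∩ ThetaDya := by
  have hlt := lt_dyadicAbove m θ
  have hfloor (k : ℕ) : θ ≤ 2 ^ k * θ - ⌊2 ^ k * θ⌋ := h k
  have hhalf : dyadicAbove m θ ≤ 1 / 2 := by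
    have hlt_one : θ < 1 := (h 0).trans_lt (Int.fract_lt_one _)
    have hfloor_nonpos : (⌊2 ^ 1 * θ⌋ : ℝ) ≤ 0 := by
      have hcast_lt_one : (⌊2 ^ 1 * θ⌋ : ℝ) < (1 : ℤ) := by push_cast; linarith [hfloor 1]
      exact Int.cast_nonpos.mpr (Int.lt_add_one_iff.mp (Int.cast_lt.mp hcast_lt_one))
    linarith [two_pow_mul_dyadicAbove_le θ hm]
  refine mem_headXi_inter_thetaDya_of_two_pow_mul_eq (h0.trans_lt hlt) hhalf
    (two_pow_mul_dyadicAbove m θ) fun k hk ↦ ⟨⌊2 ^ k * θ⌋, ?_, ?_⟩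
  · have hmono : (2 ^ k - 1) * θ ≤ (2 ^ k - 1) * dyadicAbove m θ :=
      mul_le_mul_of_nonneg_left hlt.le (sub_nonneg.mpr (one_le_pow₀ one_le_two))
    linarith [hfloor k]
  · linarith [two_pow_mul_dyadicAbove_le θ hk.le]

theorem le_fract_two_pow_mul_of_notMem_thetaDya {θ : ℝ} (hθ : θ ∈ HeadXi) (hd : θ ∉ ThetaDya)
    (k : ℕ) : θ ≤ Int.fract (2 ^ k * θ) := by
  obtain ⟨h0, h1, h⟩ := hθ
  obtain ⟨n, hn, hn1⟩ := h k
  have hne : 2 ^ k * θ - n ≠ 1 := fun heq ↦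
    hd (mem_thetaDya_of_two_pow_mul_eq (N := n + 1) h0 h1 (by push_cast; linarith))
  have hfract : Int.fract (2 ^ k * θ) = 2 ^ k * θ - n :=
    Int.fract_eq_iff.mpr ⟨by linarith, lt_of_le_of_ne hn1 hne, n, by ring⟩
  rwa [hfract]

theorem isCoprime_two_pow_two_pow_sub_one (m : ℕ) {k : ℕ} (hk : 1 ≤ k) :
    IsCoprime ((2 : ℤ) ^ m) (2 ^ k - 1) := by
  obtain ⟨l, rfl⟩ := Nat.exists_eq_add_of_le hk
  exact IsCoprime.pow_left ⟨2 ^ l, -1, by ring⟩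

theorem disjoint_thetaPer_thetaDya : Disjoint ThetaPer ThetaDya := by
  rw [Set.disjoint_left]
  rintro t ⟨h0, h1, k, hk, n, hn⟩ ⟨-, -, m, -, N, hN⟩
  obtain ⟨a, b, hab⟩ := isCoprime_two_pow_two_pow_sub_one m hk
  have hab' : (a : ℝ) * 2 ^ m + b * (2 ^ k - 1) = 1 := by exact_mod_cast hab
  have ht : t = (a * N + b * n : ℤ) := by
    push_cast
    rw [← hN, ← hn]
    linear_combination -t * hab'
  rw [ht] at h0 h1
  have hpos : 0 < a * N + b * n := by exact_mod_cast h0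
  have hlt : a * N + b * n < 1 := by exact_mod_cast h1.trans_lt one_half_lt_one
  lia

theorem add_half_pow_le_of_mem_thetaDya {θ : ℝ} {m k : ℕ} {N n : ℤ} (hθ : θ ∈ ThetaDya)
    (hN : 2 ^ m * θ = N) (hk : 1 ≤ k) (hn : θ ≤ 2 ^ k * θ - n) :
    θ + (1 / 2) ^ m ≤ 2 ^ k * θ - n := by
  have hne : θ ≠ 2 ^ k * θ - n := fun heq ↦
    disjoint_thetaPer_thetaDya.notMem_of_mem_left
      ⟨hθ.1, hθ.2.1, k, hk, n, by linarith⟩ hθ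
  have hint : 2 ^ m * (2 ^ k * θ - n - θ) = (2 ^ k * N - 2 ^ m * n - N : ℤ) := by
    push_cast
    rw [← hN]
    ring
  linarith [half_pow_le_of_two_pow_mul_eq (sub_pos.mpr (lt_of_le_of_ne hn hne)) hint]

theorem sub_half_pow_mem_headXi_inter_thetaDya {θ : ℝ} {m p : ℕ} {N : ℤ} (hθ : θ ∈ HeadXi)
    (hm : 1 ≤ m) (hN : 2 ^ m * θ = N) (hp : 2 * m ≤ p) :
    θ - (1 / 2) ^ p ∈ HeadXi ∩ ThetaDya := by
  obtain ⟨h0, h1, h⟩ := hθ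
  have hδ : (0 : ℝ) < (1 / 2) ^ p := by positivity
  have hpos : 0 < θ - (1 / 2) ^ p :=
    sub_pos.mpr <| (pow_lt_pow_right_of_lt_one₀ one_half_pos one_half_lt_one (by lia)).trans_le
      (half_pow_le_of_two_pow_mul_eq h0 hN)
  obtain ⟨z, hz⟩ := exists_int_two_pow_mul_eq_of_le hN (show m ≤ p by lia)
  have hlevel : 2 ^ p * (θ - (1 / 2) ^ p) = (z - 1 : ℤ) := by
    rw [mul_sub, hz, ← mul_pow]
    norm_num
  refine mem_headXi_inter_thetaDya_of_two_pow_mul_eq hpos (by linarith) hlevel fun k hk ↦ ?_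
  have hshift : 0 < 2 ^ k * (1 / 2 : ℝ) ^ p := by positivity
  rcases lt_or_ge k m with hkm | hmk
  · rcases Nat.eq_zero_or_pos k with rfl | hk0
    · exact ⟨0, by simp, by norm_num; linarith⟩
    · obtain ⟨n, hn, hn1⟩ := h k
      have hgap := add_half_pow_le_of_mem_thetaDya
        (mem_thetaDya_of_two_pow_mul_eq h0 h1 hN) hN hk0 hn
      have hsmall := two_pow_mul_half_pow_le (show k + m ≤ p by lia)
      exact ⟨n, by linarith, by linarith⟩
  · obtain ⟨w, hw⟩ := exists_int_two_pow_mul_eq_of_le hN hmk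
    have hhalf := two_pow_mul_half_pow_le (show k + 1 ≤ p from hk)
    exact ⟨w - 1, by push_cast; linarith, by push_cast; linarith⟩

theorem exists_mem_headXi_inter_thetaDya_gt {θ ε : ℝ} (h0 : 0 ≤ θ)
    (h : ∀ k : ℕ, θ ≤ Int.fract (2 ^ k * θ)) (hε : 0 < ε) :
    ∃ t ∈ HeadXi ∩ ThetaDya, θ < t ∧ t < θ + ε := by
  obtain ⟨j, hj⟩ := exists_pow_lt_of_lt_one hε (one_half_lt_one (α := ℝ))
  have hpow : (1 / 2 : ℝ) ^ (j + 1) ≤ (1 / 2) ^ j :=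
    pow_le_pow_of_le_one one_half_pos.le one_half_lt_one.le (Nat.le_add_right j 1)
  refine ⟨dyadicAbove (j + 1) θ, dyadicAbove_mem_headXi_inter_thetaDya (Nat.le_add_left 1 j) h0 h,
    lt_dyadicAbove _ _, ?_⟩
  linarith [dyadicAbove_le (j + 1) θ]

theorem exists_mem_headXi_inter_thetaDya_lt {θ ε : ℝ} (hθ : θ ∈ HeadXi ∩ ThetaDya)
    (hε : 0 < ε) : ∃ t ∈ HeadXi ∩ ThetaDya, θ - ε < t ∧ t < θ := by
  obtain ⟨hXi, -, -, m, hm, N, hN⟩ := hθ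
  obtain ⟨j, hj⟩ := exists_pow_lt_of_lt_one hε (one_half_lt_one (α := ℝ))
  have hpow : (1 / 2 : ℝ) ^ (2 * m + j) ≤ (1 / 2) ^ j :=
    pow_le_pow_of_le_one one_half_pos.le one_half_lt_one.le (Nat.le_add_left j _)
  exact ⟨θ - (1 / 2) ^ (2 * m + j),
    sub_half_pow_mem_headXi_inter_thetaDya hXi hm hN (Nat.le_add_right _ j),
    by linarith, sub_lt_self θ (by positivity)⟩

theorem headXi_boundary_points_accumulate_general (θ : ℝ) (hθ : θ ∈ HeadXi ∪ {0}) :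
    ∀ ε > 0, ∃ t ∈ HeadXi, t ∈ ThetaDya ∧ 0 < |t - θ| ∧ |t - θ| < ε := by
  intro ε hε
  by_cases hd : θ ∈ HeadXi ∩ ThetaDya
  · obtain ⟨t, ⟨hXi, hDya⟩, hlow, hlt⟩ := exists_mem_headXi_inter_thetaDya_lt hd hε
    exact ⟨t, hXi, hDya, abs_sub_pos.mpr hlt.ne, abs_sub_lt_iff.mpr ⟨by linarith, by linarith⟩⟩
  · have hfract : 0 ≤ θ ∧ ∀ k : ℕ, θ ≤ Int.fract (2 ^ k * θ) := by
      rcases hθ with hθ | rfl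
      · exact ⟨hθ.1.le, le_fract_two_pow_mul_of_notMem_thetaDya hθ fun h ↦ hd ⟨hθ, h⟩⟩
      · simp
    obtain ⟨t, ⟨hXi, hDya⟩, hgt, hup⟩ :=
      exists_mem_headXi_inter_thetaDya_gt hfract.1 hfract.2 hε
    exact ⟨t, hXi, hDya, abs_sub_pos.mpr hgt.ne', abs_sub_lt_iff.mpr ⟨by linarith, by linarith⟩⟩

/-- Every point of `Ξ ∪ {0}` is an accumulation point of `(Ξ ∩ Θ_per) ∪ (Ξ ∩ Θ_dya)`. -/
theorem headXi_boundary_points_accumulate (θ : ℝ) (hθ : θ ∈ HeadXi ∪ {0}) :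
    ∀ ε > 0, ∃ t ∈ HeadXi, t ∈ ThetaPer ∪ ThetaDya ∧
      0 < |t - θ| ∧ |t - θ| < ε := by
  intro ε hε
  obtain ⟨t, hXi, hDya, h⟩ := headXi_boundary_points_accumulate_general θ hθ ε hε
  exact ⟨t, hXi, Or.inr hDya, h⟩
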